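/- Let n ≥ 1 and let c_1, …, c_n be positive integers such that M(c_1, …, c_n) = Id or M(c_1, …, c_n) = −Id. Then c_1 + c_2 + ⋯ + c_n ≤ 3n − 6. -/

import Mathlib

/-- `M(c₁, …, c_n) = [[c₁,−1],[1,0]] ⋯ [[c_n,−1],[1,0]]`. -/
def Mneg (cs : List ℤ) : Matrix (Fin 2) (Fin 2) ℤ :=
  (cs.map fun c => !![c, -1; 1, 0]).prod

theorem Mneg_cons (a : ℤ) (l : List ℤ) : Mneg (a :: l) = !![a, -1; 1, 0] * Mneg l := by
  simp [Mneg]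

theorem Mneg_nil : Mneg [] = 1 := by simp [Mneg]

theorem Mneg_append (a b : List ℤ) : Mneg (a ++ b) = Mneg a * Mneg b := by
  simp [Mneg]

theorem Mneg_rot (a b : List ℤ) (h : Mneg (a ++ b) = 1 ∨ Mneg (a ++ b) = -1) :
    Mneg (b ++ a) = 1 ∨ Mneg (b ++ a) = -1 := by
  rw [Mneg_append] at h ⊢
  rcases h with h | h
  · left; exact mul_eq_one_comm.mp h
  · right
    have h1 : (-Mneg a) * Mneg b = 1 := by rw [neg_mul, h, neg_neg]
    have h2 := mul_eq_one_comm.mp h1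
    rw [mul_neg] at h2
    rw [← h2, neg_neg]

theorem Mneg_big (l : List ℤ) (h : ∀ x ∈ l, 2 ≤ x) :
    0 ≤ Mneg l 1 0 ∧ Mneg l 1 0 < Mneg l 0 0 := by
  induction l with
  | nil => simp [Mneg_nil]
  | cons a l ih =>
    have h1 := ih (fun x hx => h x (by simp [hx]))
    have h2 := h a (by simp)
    rw [Mneg_cons]
    simp [Matrix.mul_apply, Fin.sum_univ_two]
    constructor
    · linarith
    · nlinarith

theorem Mneg_red1 (a b : ℤ) (m : List ℤ) :
    Mneg (a :: 1 :: b :: m) = Mneg ((a - 1) :: (b - 1) :: m) := by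
  simp only [Mneg_cons, ← mul_assoc]
  congr 1
  ext i j
  fin_cases i <;> fin_cases j <;> simp [Matrix.mul_apply, Fin.sum_univ_two] <;> ring

theorem Mneg_red2 (x b : ℤ) (m : List ℤ) :
    Mneg (x :: 1 :: 1 :: b :: m) = - Mneg ((x + b - 1) :: m) := by
  simp only [Mneg_cons, ← mul_assoc, ← neg_mul]
  congr 1
  ext i j
  fin_cases i <;> fin_cases j <;> simp [Matrix.mul_apply, Fin.sum_univ_two] <;> ring

theorem main_aux (k : ℕ) : ∀ c : List ℤ, c.length = k → 1 ≤ k → (∀ x ∈ c, 1 ≤ x) →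
    (Mneg c = 1 ∨ Mneg c = -1) → c.sum ≤ 3 * (k : ℤ) - 6 := by
  induction k using Nat.strong_induction_on with
  | _ k ih =>
  intro c hlen hk hpos hM
  have red2 : ∀ (x b : ℤ) (m : List ℤ), m.length + 4 = k → 1 ≤ x → 1 ≤ b →
      (∀ y ∈ m, 1 ≤ y) →
      (Mneg (x :: 1 :: 1 :: b :: m) = 1 ∨ Mneg (x :: 1 :: 1 :: b :: m) = -1) →
      x + 1 + 1 + b + m.sum ≤ 3 * (k : ℤ) - 6 := by
    intro x b m hl hx hb hm h
    rw [Mneg_red2] at h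
    have h' : Mneg ((x + b - 1) :: m) = 1 ∨ Mneg ((x + b - 1) :: m) = -1 := by
      rcases h with h | h
      · right; rw [← h, neg_neg]
      · left; exact neg_injective h
    have := ih (m.length + 1) (by omega) ((x + b - 1) :: m) (by simp) (by omega)
      (by
        intro y hy
        rcases List.mem_cons.mp hy with rfl | hy
        · linarith
        · exact hm y hy) h'
    rw [List.sum_cons] at this
    push_cast at this
    have hk' : (k : ℤ) = m.length + 4 := by exact_mod_cast hl.symm
    linarith
  by_cases h1 : (1 : ℤ) ∈ c
  · obtain ⟨s, t, rfl⟩ := List.append_of_mem h1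
    have hM' := Mneg_rot _ _ hM
    have hsum : (s ++ 1 :: t).sum = 1 + (t ++ s).sum := by
      simp; ring
    have hlen' : (t ++ s).length + 1 = k := by
      rw [← hlen]; simp; omega
    have hpos' : ∀ x ∈ t ++ s, 1 ≤ x := by
      intro x hx
      apply hpos
      simp at hx ⊢
      tauto
    rw [hsum]
    rw [List.cons_append] at hM'
    generalize t ++ s = u at *
    clear hM hpos hlen h1 hsum
    rcases u with _ | ⟨b, u⟩
    · exfalso
      have e := hM'.imp (fun h => congrFun (congrFun h 1) 0) (fun h => congrFun (congrFun h 1) 0)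
      simp [Mneg] at e
    rcases List.eq_nil_or_concat u with rfl | ⟨m, a, rfl⟩
    · exfalso
      have e := hM'.imp (fun h => congrFun (congrFun h 0) 1) (fun h => congrFun (congrFun h 0) 1)
      simp [Mneg] at e
    simp only [List.concat_eq_append] at *
    have hM2 := Mneg_rot (1 :: b :: m) [a] (by simpa using hM')
    simp only [List.singleton_append] at hM2
    have ha : 1 ≤ a := hpos' a (by simp)
    have hb : 1 ≤ b := hpos' b (by simp)
    have hm : ∀ y ∈ m, 1 ≤ y := fun y hy => hpos' y (by simp [hy])
    have hl : m.length + 3 = k := by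
      rw [← hlen']; simp
    have hkz : (k : ℤ) = m.length + 3 := by exact_mod_cast hl.symm
    have hs : (b :: (m ++ [a])).sum = b + m.sum + a := by simp; ring
    rw [hs]
    by_cases hm0 : m = []
    · subst hm0
      rw [Mneg_red1] at hM2
      have e := hM2.imp (fun h => congrFun (congrFun h 1) 0) (fun h => congrFun (congrFun h 1) 0)
      have e' := hM2.imp (fun h => congrFun (congrFun h 0) 1) (fun h => congrFun (congrFun h 0) 1)
      simp [Mneg] at e e' hkz ⊢
      rw [hkz]; omega
    rcases eq_or_lt_of_le ha with rfl | ha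
    · rcases List.eq_nil_or_concat m with rfl | ⟨m', x, rfl⟩
      · exact absurd rfl hm0
      simp only [List.concat_eq_append] at *
      have h3 := Mneg_rot (1 :: 1 :: b :: m') [x] (by simpa using hM2)
      have := red2 x b m' (by rw [← hl]; simp) (hm x (by simp)) hb
        (fun y hy => hm y (by simp [hy])) (by simpa using h3)
      simp
      linarith
    rcases eq_or_lt_of_le hb with rfl | hb
    · rcases m with _ | ⟨y, m'⟩
      · exact absurd rfl hm0
      have := red2 a y m' (by rw [← hl]; simp) (by linarith) (hm y (by simp))
        (fun z hz => hm z (by simp [hz])) hM2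
      simp
      linarith
    · rw [Mneg_red1] at hM2
      have := ih (m.length + 2) (by omega) _ (by simp) (by omega)
        (by
          intro y hy
          simp only [List.mem_cons] at hy
          rcases hy with rfl | rfl | hy
          · linarith
          · linarith
          · exact hm y hy) hM2
      simp only [List.sum_cons] at this
      push_cast at this
      linarith
  · exfalso
    have h2 : ∀ x ∈ c, 2 ≤ x := by
      intro x hx
      have := hpos x hx
      have : x ≠ 1 := fun h => h1 (h ▸ hx)
      omega
    rcases c with _ | ⟨a, l⟩
    · simp at hlen; omega
    have h3 := Mneg_big l (fun x hx => h2 x (by simp [hx]))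
    have e := hM.imp (fun h => congrFun (congrFun h 1) 0) (fun h => congrFun (congrFun h 1) 0)
    rw [Mneg_cons] at e
    simp [Matrix.mul_apply, Fin.sum_univ_two] at e
    omega

/-- if `n ≥ 1` and `c₁, …, c_n` are positive integers with
`M(c₁, …, c_n) = Id` or `M(c₁, …, c_n) = −Id`, then
`c₁ + c₂ + ⋯ + c_n ≤ 3n − 6`. -/
theorem stmt10 (n : ℕ) (hn : 1 ≤ n) (c : List ℤ) (hlen : c.length = n)
    (hpos : ∀ x ∈ c, 1 ≤ x)
    (hM : Mneg c = 1 ∨ Mneg c = -1) :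
    c.sum ≤ 3 * (n : ℤ) - 6 := by
  exact main_aux n c hlen hn hpos hM
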